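/- arXiv:1907.02219 — 2 statements merged into one kernel-verified Lean document; each statement's English description precedes it below -/
import Mathlib

section
/- Let f ∈ Ω_f, ξ ∈ Ω_ξ and s^l₀ ∈ Ω_sl(ξ). Suppose that at the unique optimal solution of the DC-OPF exactly N_G − 1 inequality constraints are binding; let S_G be the set of generators i for which a generation bound is binding and S_B the set of branches e for which a flow bound is binding (so |S_G| + |S_B| = N_G − 1, since s̄ > s̲ and p̄ > p̲ prevent both bounds of a generator or branch from binding simultaneously); and suppose the gradients of these binding inequality constraints together with the gradients of the N+1 equality constraints are linearly independent in ℝ^{N_G+N}. Then: (a) the matrix R(S_G,S_B)ᵀ is invertible; and (b) there exists an open set U with s^l₀ ∈ U ⊆ Ω_sl(ξ) such that the set of binding inequality constraints at the unique optimum is the same for every s^l ∈ U and the OPF map is affine on U with OPF(s^l) = OPF(s^l₀) + J(S_G,S_B)·(s^l − s^l₀) for all s^l ∈ U; in particular, the OPF map is Fréchet differentiable at s^l₀ with derivative J(S_G,S_B). -/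
open Matrix

noncomputable section

/-- Parameter tuple ξ = (s̄, s̲, p̄, p̲). -/
abbrev XiT (NG E : ℕ) : Type := (Fin NG → ℝ) × (Fin NG → ℝ) × (Fin E → ℝ) × (Fin E → ℝ)

/-- Each column of `C` has exactly one `+1`, one `-1`, and zeros elsewhere. -/
def IsIncidence {NG NL E : ℕ} (C : Matrix (Fin (NG + NL)) (Fin E) ℝ) : Prop :=
  ∀ e : Fin E, ∃ u v : Fin (NG + NL), u ≠ v ∧ C u e = 1 ∧ C v e = -1 ∧
    ∀ w : Fin (NG + NL), w ≠ u → w ≠ v → C w e = 0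

/-- Connectedness: the kernel of `Cᵀ` consists exactly of the constant vectors. -/
def ConnectedIncidence {NG NL E : ℕ} (C : Matrix (Fin (NG + NL)) (Fin E) ℝ) : Prop :=
  ∀ x : Fin (NG + NL) → ℝ, Cᵀ *ᵥ x = 0 ↔ ∃ c : ℝ, x = fun _ => c

/-- `B` is diagonal with strictly positive diagonal entries. -/
def PosDiag {E : ℕ} (B : Matrix (Fin E) (Fin E) ℝ) : Prop :=
  (∀ e, 0 < B e e) ∧ ∀ e e' : Fin E, e ≠ e' → B e e' = 0

/-- Feasibility of `(s^g, θ)` for the DC-OPF with limits `ξ` and loads `sl`. -/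
def Feasible {NG NL E : ℕ} (C : Matrix (Fin (NG + NL)) (Fin E) ℝ)
    (B : Matrix (Fin E) (Fin E) ℝ) (ξ : XiT NG E) (sl : Fin NL → ℝ)
    (sg : Fin NG → ℝ) (θ : Fin (NG + NL) → ℝ) : Prop :=
  (∀ h : 0 < NG + NL, θ ⟨0, h⟩ = 0) ∧
  (C * B * Cᵀ) *ᵥ θ = Fin.append sg (fun j => -(sl j)) ∧
  (∀ i, ξ.2.1 i ≤ sg i ∧ sg i ≤ ξ.1 i) ∧
  (∀ e, ξ.2.2.2 e ≤ ((B * Cᵀ) *ᵥ θ) e ∧ ((B * Cᵀ) *ᵥ θ) e ≤ ξ.2.2.1 e)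

/-- The set Ω_ξ of admissible system limits. -/
def OmegaXi {NG NL E : ℕ} (C : Matrix (Fin (NG + NL)) (Fin E) ℝ)
    (B : Matrix (Fin E) (Fin E) ℝ) : Set (XiT NG E) :=
  { ξ | (∀ i, 0 ≤ ξ.2.1 i) ∧ (∀ i, ξ.2.1 i < ξ.1 i) ∧ (∀ e, ξ.2.2.2 e < ξ.2.2.1 e) ∧
    ∃ sl : Fin NL → ℝ, (∀ j, 0 < sl j) ∧ ∃ sg θ, Feasible C B ξ sl sg θ }

/-- The set Ω_sl(ξ) of strictly positive feasible load profiles. -/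
def OmegaSl {NG NL E : ℕ} (C : Matrix (Fin (NG + NL)) (Fin E) ℝ)
    (B : Matrix (Fin E) (Fin E) ℝ) (ξ : XiT NG E) : Set (Fin NL → ℝ) :=
  { sl | (∀ j, 0 < sl j) ∧ ∃ sg θ, Feasible C B ξ sl sg θ }

/-- `(sg, θ)` is an optimal solution of the DC-OPF. -/
def IsOptimal {NG NL E : ℕ} (C : Matrix (Fin (NG + NL)) (Fin E) ℝ)
    (B : Matrix (Fin E) (Fin E) ℝ) (f : Fin NG → ℝ) (ξ : XiT NG E)
    (sl : Fin NL → ℝ) (sg : Fin NG → ℝ) (θ : Fin (NG + NL) → ℝ) : Prop :=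
  Feasible C B ξ sl sg θ ∧
  ∀ sg' θ', Feasible C B ξ sl sg' θ' → f ⬝ᵥ sg ≤ f ⬝ᵥ sg'

/-- The matrix M: first N rows are C B Cᵀ, last row is e₁ᵀ. -/
def Mmat {NG NL E : ℕ} (C : Matrix (Fin (NG + NL)) (Fin E) ℝ)
    (B : Matrix (Fin E) (Fin E) ℝ) : Matrix (Fin (NG + NL + 1)) (Fin (NG + NL)) ℝ :=
  Matrix.of fun i j => if h : (i : ℕ) < NG + NL then (C * B * Cᵀ) ⟨(i : ℕ), h⟩ j
    else if (j : ℕ) = 0 then 1 else 0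

/-- KKT point for the DC-OPF. -/
def IsKKT {NG NL E : ℕ} (C : Matrix (Fin (NG + NL)) (Fin E) ℝ)
    (B : Matrix (Fin E) (Fin E) ℝ) (f : Fin NG → ℝ) (ξ : XiT NG E)
    (sl : Fin NL → ℝ) (sg : Fin NG → ℝ) (θ : Fin (NG + NL) → ℝ)
    (τ : Fin (NG + NL + 1) → ℝ) (μp μm : Fin E → ℝ) (lp lm : Fin NG → ℝ) : Prop :=
  Feasible C B ξ sl sg θ ∧
  (Mmat C B)ᵀ *ᵥ τ + (C * B) *ᵥ (μp - μm) = 0 ∧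
  (∀ i : Fin NG, -f i = -τ (Fin.castLE (by omega) i) + lp i - lm i) ∧
  (∀ e, 0 ≤ μp e) ∧ (∀ e, 0 ≤ μm e) ∧ (∀ i, 0 ≤ lp i) ∧ (∀ i, 0 ≤ lm i) ∧
  μp ⬝ᵥ (((B * Cᵀ) *ᵥ θ) - ξ.2.2.1) = 0 ∧
  μm ⬝ᵥ (ξ.2.2.2 - ((B * Cᵀ) *ᵥ θ)) = 0 ∧
  lp ⬝ᵥ (sg - ξ.1) = 0 ∧
  lm ⬝ᵥ (ξ.2.1 - sg) = 0

/-- ℓ₀ "norm": number of nonzero entries. -/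
def nnz {n : ℕ} (v : Fin n → ℝ) : ℕ := Set.ncard { i | v i ≠ 0 }

/-- The set Ω_f of well-behaved cost vectors. -/
def OmegaF {NG NL E : ℕ} (C : Matrix (Fin (NG + NL)) (Fin E) ℝ)
    (B : Matrix (Fin E) (Fin E) ℝ) : Set (Fin NG → ℝ) :=
  { f | (∀ i, 0 ≤ f i) ∧
    ∀ ξ ∈ OmegaXi C B, ∀ sl ∈ OmegaSl C B ξ,
      (∃! p : (Fin NG → ℝ) × (Fin (NG + NL) → ℝ), IsOptimal C B f ξ sl p.1 p.2) ∧
      ∀ sg θ τ μp μm lp lm, IsKKT C B f ξ sl sg θ τ μp μm lp lm →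
        NG - 1 ≤ nnz μp + nnz μm + nnz lp + nnz lm }

/-- Number of binding inequality constraints at `(sg, θ)` (among the 2N_G + 2E). -/
def bindingCount {NG NL E : ℕ} (C : Matrix (Fin (NG + NL)) (Fin E) ℝ)
    (B : Matrix (Fin E) (Fin E) ℝ) (ξ : XiT NG E) (sg : Fin NG → ℝ)
    (θ : Fin (NG + NL) → ℝ) : ℕ :=
  Set.ncard { i : Fin NG | sg i = ξ.1 i } + Set.ncard { i : Fin NG | sg i = ξ.2.1 i } +
  Set.ncard { e : Fin E | ((B * Cᵀ) *ᵥ θ) e = ξ.2.2.1 e } +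
  Set.ncard { e : Fin E | ((B * Cᵀ) *ᵥ θ) e = ξ.2.2.2 e }

/-- ~Ω_sl(ξ, f): loads with exactly N_G − 1 binding constraints at the optimum. -/
def TOmegaSl {NG NL E : ℕ} (C : Matrix (Fin (NG + NL)) (Fin E) ℝ)
    (B : Matrix (Fin E) (Fin E) ℝ) (f : Fin NG → ℝ) (ξ : XiT NG E) :
    Set (Fin NL → ℝ) :=
  { sl | sl ∈ OmegaSl C B ξ ∧
    ∀ sg θ, IsOptimal C B f ξ sl sg θ → bindingCount C B ξ sg θ = NG - 1 }

/-- Indices of binding inequality constraints: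
`inl i` = upper generation, `inr (inl i)` = lower generation,
`inr (inr (inl e))` = upper flow, `inr (inr (inr e))` = lower flow. -/
def BindingIdx {NG NL E : ℕ} (C : Matrix (Fin (NG + NL)) (Fin E) ℝ)
    (B : Matrix (Fin E) (Fin E) ℝ) (ξ : XiT NG E) (sg : Fin NG → ℝ)
    (θ : Fin (NG + NL) → ℝ) : Set (Fin NG ⊕ Fin NG ⊕ Fin E ⊕ Fin E) :=
  { c | match c with
    | Sum.inl i => sg i = ξ.1 i
    | Sum.inr (Sum.inl i) => sg i = ξ.2.1 i
    | Sum.inr (Sum.inr (Sum.inl e)) => ((B * Cᵀ) *ᵥ θ) e = ξ.2.2.1 e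
    | Sum.inr (Sum.inr (Sum.inr e)) => ((B * Cᵀ) *ᵥ θ) e = ξ.2.2.2 e }

/-- Gradients of the N + 1 equality constraints, as vectors in ℝ^{N_G} × ℝ^{N}. -/
def eqGrad {NG NL E : ℕ} (C : Matrix (Fin (NG + NL)) (Fin E) ℝ)
    (B : Matrix (Fin E) (Fin E) ℝ) :
    (Unit ⊕ Fin (NG + NL)) → (Fin NG → ℝ) × (Fin (NG + NL) → ℝ)
  | Sum.inl _ => (0, fun j => if (j : ℕ) = 0 then 1 else 0)
  | Sum.inr i => ((fun k : Fin NG => if (k : ℕ) = (i : ℕ) then -1 else 0),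
      fun j => (C * B * Cᵀ) i j)

/-- Gradients of the inequality constraints. -/
def ineqGrad {NG NL E : ℕ} (C : Matrix (Fin (NG + NL)) (Fin E) ℝ)
    (B : Matrix (Fin E) (Fin E) ℝ) :
    (Fin NG ⊕ Fin NG ⊕ Fin E ⊕ Fin E) → (Fin NG → ℝ) × (Fin (NG + NL) → ℝ)
  | Sum.inl i => (Pi.single i 1, 0)
  | Sum.inr (Sum.inl i) => (-Pi.single i 1, 0)
  | Sum.inr (Sum.inr (Sum.inl e)) => (0, fun j => (B * Cᵀ) e j)
  | Sum.inr (Sum.inr (Sum.inr e)) => (0, fun j => -(B * Cᵀ) e j)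

/-- The family of gradients of all equality constraints together with the binding
inequality constraints at `(sg, θ)`. -/
def fullGrad {NG NL E : ℕ} (C : Matrix (Fin (NG + NL)) (Fin E) ℝ)
    (B : Matrix (Fin E) (Fin E) ℝ) (ξ : XiT NG E) (sg : Fin NG → ℝ)
    (θ : Fin (NG + NL) → ℝ) :
    ((Unit ⊕ Fin (NG + NL)) ⊕ ↥(BindingIdx C B ξ sg θ)) →
      (Fin NG → ℝ) × (Fin (NG + NL) → ℝ) :=
  fun i => match i with
    | Sum.inl j => eqGrad C B j
    | Sum.inr c => ineqGrad C B c.1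

/-- S_G ⊥ S_B : the equality-constraint gradients together with the gradients
`(e_i, 0)`, `i ∈ S_G`, and `(0, row e of B Cᵀ)`, `e ∈ S_B`, are linearly independent. -/
def Perp {NG NL E : ℕ} (C : Matrix (Fin (NG + NL)) (Fin E) ℝ)
    (B : Matrix (Fin E) (Fin E) ℝ) (SG : Finset (Fin NG)) (SB : Finset (Fin E)) : Prop :=
  LinearIndependent ℝ (fun i : (Unit ⊕ Fin (NG + NL)) ⊕ (↥SG ⊕ ↥SB) =>
    match i with
    | Sum.inl j => eqGrad C B j
    | Sum.inr (Sum.inl g) => ((Pi.single (g : Fin NG) 1 : Fin NG → ℝ), (0 : Fin (NG + NL) → ℝ))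
    | Sum.inr (Sum.inr e) => ((0 : Fin NG → ℝ), fun j => (B * Cᵀ) (e : Fin E) j))

/-- The OPF operator: the generation part of the (unique) optimal solution. -/
def OPFmap {NG NL E : ℕ} (C : Matrix (Fin (NG + NL)) (Fin E) ℝ)
    (B : Matrix (Fin E) (Fin E) ℝ) (f : Fin NG → ℝ) (ξ : XiT NG E)
    (sl : Fin NL → ℝ) : Fin NG → ℝ := by
  classical
  exact if h : ∃ p : (Fin NG → ℝ) × (Fin (NG + NL) → ℝ), IsOptimal C B f ξ sl p.1 p.2
    then h.choose.1 else 0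

/-- The matrix R(S_G, S_B)ᵀ: rows N_G+1,…,N of C B Cᵀ; the rows of C B Cᵀ indexed
by S_G; the rows of B Cᵀ indexed by S_B; and e₁ᵀ. -/
def Rmat {NG NL E : ℕ} (C : Matrix (Fin (NG + NL)) (Fin E) ℝ)
    (B : Matrix (Fin E) (Fin E) ℝ) (SG : Finset (Fin NG)) (SB : Finset (Fin E)) :
    Matrix ((Fin NL ⊕ (↥SG ⊕ ↥SB)) ⊕ Unit) (Fin (NG + NL)) ℝ :=
  Matrix.of fun i j => match i with
    | Sum.inl (Sum.inl k) => (C * B * Cᵀ) (Fin.natAdd NG k) j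
    | Sum.inl (Sum.inr (Sum.inl g)) => (C * B * Cᵀ) (Fin.castAdd NL (g : Fin NG)) j
    | Sum.inl (Sum.inr (Sum.inr e)) => (B * Cᵀ) (e : Fin E) j
    | Sum.inr _ => if (j : ℕ) = 0 then 1 else 0

/-- The matrix Π applied to a load vector: embeds ℝ^{N_L} in the row-index space. -/
def padSl {NG NL E : ℕ} (SG : Finset (Fin NG)) (SB : Finset (Fin E))
    (v : Fin NL → ℝ) : (Fin NL ⊕ (↥SG ⊕ ↥SB)) ⊕ Unit → ℝ
  | Sum.inl (Sum.inl k) => v k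
  | _ => 0

/-- J(S_G, S_B) as a map: v ↦ −G (R(S_G,S_B)ᵀ)⁻¹ Π v, where G consists of the
first N_G rows of C B Cᵀ. -/
def JFun {NG NL E : ℕ} (C : Matrix (Fin (NG + NL)) (Fin E) ℝ)
    (B : Matrix (Fin E) (Fin E) ℝ) (SG : Finset (Fin NG)) (SB : Finset (Fin E))
    (v : Fin NL → ℝ) : Fin NG → ℝ :=
  fun i =>
    -(((C * B * Cᵀ) *ᵥ (Function.invFun (Rmat C B SG SB).mulVec (padSl SG SB v)))
      (Fin.castAdd NL i))

/-- J(S_G, S_B) as an N_G × N_L matrix. -/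
def Jmatrix {NG NL E : ℕ} (C : Matrix (Fin (NG + NL)) (Fin E) ℝ)
    (B : Matrix (Fin E) (Fin E) ℝ) (SG : Finset (Fin NG)) (SB : Finset (Fin E)) :
    Matrix (Fin NG) (Fin NL) ℝ :=
  Matrix.of fun i j => JFun C B SG SB (Pi.single j 1) i

lemma Rmat_load {NG NL E : ℕ} (C : Matrix (Fin (NG + NL)) (Fin E) ℝ)
    (B : Matrix (Fin E) (Fin E) ℝ) (SG : Finset (Fin NG)) (SB : Finset (Fin E))
    (x : Fin (NG + NL) → ℝ) (k : Fin NL) :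
    (Rmat C B SG SB *ᵥ x) (Sum.inl (Sum.inl k)) = ((C * B * Cᵀ) *ᵥ x) (Fin.natAdd NG k) := rfl

lemma Rmat_gen {NG NL E : ℕ} (C : Matrix (Fin (NG + NL)) (Fin E) ℝ)
    (B : Matrix (Fin E) (Fin E) ℝ) (SG : Finset (Fin NG)) (SB : Finset (Fin E))
    (x : Fin (NG + NL) → ℝ) (g : SG) :
    (Rmat C B SG SB *ᵥ x) (Sum.inl (Sum.inr (Sum.inl g))) =
      ((C * B * Cᵀ) *ᵥ x) (Fin.castAdd NL (g : Fin NG)) := rfl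

lemma Rmat_flow {NG NL E : ℕ} (C : Matrix (Fin (NG + NL)) (Fin E) ℝ)
    (B : Matrix (Fin E) (Fin E) ℝ) (SG : Finset (Fin NG)) (SB : Finset (Fin E))
    (x : Fin (NG + NL) → ℝ) (e : SB) :
    (Rmat C B SG SB *ᵥ x) (Sum.inl (Sum.inr (Sum.inr e))) =
      ((B * Cᵀ) *ᵥ x) (e : Fin E) := rfl

lemma first_dot {n : ℕ} (h : 0 < n) (x : Fin n → ℝ) :
    (fun j : Fin n => if (j : ℕ) = 0 then (1 : ℝ) else 0) ⬝ᵥ x = x ⟨0, h⟩ := by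
  unfold dotProduct
  rw [Finset.sum_eq_single (⟨0, h⟩ : Fin n)]
  · simp
  · intro b _ hb
    have : (b : ℕ) ≠ 0 := fun h' => hb (Fin.ext h')
    simp [this]
  · simp

lemma Rmat_slack {NG NL E : ℕ} (C : Matrix (Fin (NG + NL)) (Fin E) ℝ)
    (B : Matrix (Fin E) (Fin E) ℝ) (SG : Finset (Fin NG)) (SB : Finset (Fin E))
    (x : Fin (NG + NL) → ℝ) (h : 0 < NG + NL) (u : Unit) :
    (Rmat C B SG SB *ᵥ x) (Sum.inr u) = x ⟨0, h⟩ := first_dot h x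

lemma sgpart_dot {NG NL : ℕ} (i : Fin (NG + NL)) (y : Fin (NG + NL) → ℝ)
    (hy : ∀ k : Fin NL, y (Fin.natAdd NG k) = 0) :
    (fun k : Fin NG => if (k : ℕ) = (i : ℕ) then (-1 : ℝ) else 0) ⬝ᵥ
      (fun k => y (Fin.castAdd NL k)) = - y i := by
  unfold dotProduct
  induction i using Fin.addCases with
  | left i =>
    rw [Finset.sum_eq_single i]
    · simp
    · intro b _ hb
      have : (b : ℕ) ≠ (i : ℕ) := fun h' => hb (Fin.ext h')
      simp [this]
    · simp
  | right k =>
    rw [hy k]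
    simp only [Fin.val_natAdd, neg_zero]
    apply Finset.sum_eq_zero
    intro b _
    have : (b : ℕ) ≠ NG + k := by have := b.2; omega
    simp [this]

lemma Rmat_injective {NG NL E : ℕ} (hNG : 0 < NG)
    (C : Matrix (Fin (NG + NL)) (Fin E) ℝ) (B : Matrix (Fin E) (Fin E) ℝ)
    (ξ : XiT NG E) (sg₀ : Fin NG → ℝ) (θ₀ : Fin (NG + NL) → ℝ)
    (SG : Finset (Fin NG)) (SB : Finset (Fin E))
    (hSG : ∀ i : Fin NG, i ∈ SG ↔ (sg₀ i = ξ.1 i ∨ sg₀ i = ξ.2.1 i))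
    (hSB : ∀ e : Fin E, e ∈ SB ↔
      (((B * Cᵀ) *ᵥ θ₀) e = ξ.2.2.1 e ∨ ((B * Cᵀ) *ᵥ θ₀) e = ξ.2.2.2 e))
    (hcard : SG.card + SB.card = NG - 1)
    (hindep : LinearIndependent ℝ (fullGrad C B ξ sg₀ θ₀)) :
    ∀ x, Rmat C B SG SB *ᵥ x = 0 → x = 0 := by
  classical
  intro x hx
  have hN : 0 < NG + NL := by omega
  have hload : ∀ k, ((C * B * Cᵀ) *ᵥ x) (Fin.natAdd NG k) = 0 := fun k => by
    rw [← Rmat_load C B SG SB, hx]; rfl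
  have hgen : ∀ g ∈ SG, ((C * B * Cᵀ) *ᵥ x) (Fin.castAdd NL g) = 0 := fun g hg => by
    have := Rmat_gen C B SG SB x ⟨g, hg⟩
    rw [hx] at this; exact this.symm
  have hflow : ∀ e ∈ SB, ((B * Cᵀ) *ᵥ x) e = 0 := fun e he => by
    have := Rmat_flow C B SG SB x ⟨e, he⟩
    rw [hx] at this; exact this.symm
  have hslack : x ⟨0, hN⟩ = 0 := by
    rw [← Rmat_slack C B SG SB x hN (), hx]; rfl
  have : Fintype (BindingIdx C B ξ sg₀ θ₀) := Fintype.ofFinite _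
  -- cardinality
  have hc1 : NG - 1 ≤ Fintype.card (BindingIdx C B ξ sg₀ θ₀) := by
    let m : SG ⊕ SB → BindingIdx C B ξ sg₀ θ₀ := fun z => match z with
      | Sum.inl g => if h : sg₀ g = ξ.1 g then ⟨Sum.inl g, h⟩ else
          ⟨Sum.inr (Sum.inl g), ((hSG g).1 g.2).resolve_left h⟩
      | Sum.inr e => if h : ((B * Cᵀ) *ᵥ θ₀) e = ξ.2.2.1 e then
          ⟨Sum.inr (Sum.inr (Sum.inl e)), h⟩ else
          ⟨Sum.inr (Sum.inr (Sum.inr e)), ((hSB e).1 e.2).resolve_left h⟩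
    have hm : Function.Injective m := by
      rintro (a | a) (b | b) hab
      all_goals
        have hab' := congrArg Subtype.val hab
        simp only [m] at hab'
        split_ifs at hab' <;> simp at hab'
      all_goals
        exact congrArg _ hab'
    have := Fintype.card_le_of_injective m hm
    simpa [hcard] using this
  have hfr : Module.finrank ℝ ((Fin NG → ℝ) × (Fin (NG + NL) → ℝ)) = NG + (NG + NL) := by
    simp
  have hc2 := hindep.fintype_card_le_finrank
  have hspan := hindep.span_eq_top_of_card_eq_finrank' (by
    rw [hfr] at hc2 ⊢
    simp only [Fintype.card_sum, Fintype.card_unit, Fintype.card_fin] at hc2 ⊢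
    omega)
  let φ : ((Fin NG → ℝ) × (Fin (NG + NL) → ℝ)) →ₗ[ℝ] ℝ :=
    { toFun := fun w => w.1 ⬝ᵥ (fun k => ((C * B * Cᵀ) *ᵥ x) (Fin.castAdd NL k)) + w.2 ⬝ᵥ x
      map_add' := by
        intro a b
        simp only [Prod.fst_add, Prod.snd_add, add_dotProduct]; ring
      map_smul' := by
        intro a b
        simp only [Prod.smul_fst, Prod.smul_snd, smul_dotProduct, smul_eq_mul, RingHom.id_apply]
        ring }
  have hφ : φ = 0 := by
    apply LinearMap.ext_on_range hspan
    rintro ((u | i) | ⟨c, hc⟩)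
    · change (0 : Fin NG → ℝ) ⬝ᵥ _ + _ = (0 : ℝ)
      rw [zero_dotProduct, zero_add]
      exact (first_dot hN x).trans hslack
    · change (fun k : Fin NG => if (k : ℕ) = (i : ℕ) then (-1 : ℝ) else 0) ⬝ᵥ
        (fun k => ((C * B * Cᵀ) *ᵥ x) (Fin.castAdd NL k)) + ((C * B * Cᵀ) *ᵥ x) i = (0 : ℝ)
      rw [sgpart_dot i _ hload]; ring
    · rcases c with i | i | e | e
      · change (Pi.single i 1 : Fin NG → ℝ) ⬝ᵥ _ + (0 : Fin (NG + NL) → ℝ) ⬝ᵥ _ = (0 : ℝ)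
        rw [single_dotProduct, zero_dotProduct, hgen i ((hSG i).2 (Or.inl hc))]; simp
      · change (-Pi.single i 1 : Fin NG → ℝ) ⬝ᵥ _ + (0 : Fin (NG + NL) → ℝ) ⬝ᵥ _ = (0 : ℝ)
        rw [neg_dotProduct, single_dotProduct, zero_dotProduct,
          hgen i ((hSG i).2 (Or.inr hc))]; simp
      · change (0 : Fin NG → ℝ) ⬝ᵥ _ + ((B * Cᵀ) *ᵥ x) e = (0 : ℝ)
        rw [zero_dotProduct, hflow e ((hSB e).2 (Or.inl hc))]; simp
      · change (0 : Fin NG → ℝ) ⬝ᵥ _ + (-((B * Cᵀ) e)) ⬝ᵥ x = (0 : ℝ)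
        have h2 : (B * Cᵀ) e ⬝ᵥ x = 0 := hflow e ((hSB e).2 (Or.inr hc))
        rw [zero_dotProduct, neg_dotProduct, h2]; simp
  have h0 : φ (0, x) = 0 := by rw [hφ]; rfl
  have h1 : x ⬝ᵥ x = 0 := by
    have : (0 : Fin NG → ℝ) ⬝ᵥ (fun k => ((C * B * Cᵀ) *ᵥ x) (Fin.castAdd NL k)) + x ⬝ᵥ x = 0 := h0
    rwa [zero_dotProduct, zero_add] at this
  exact dotProduct_self_eq_zero.1 h1

/-- small step for one bound: stays below if either strictly below, or direction nonpositive -/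
lemma ev_le (a d u : ℝ) (h : a < u ∨ (a ≤ u ∧ d ≤ 0)) :
    ∀ᶠ t in nhdsWithin (0 : ℝ) (Set.Ioi 0), a + t * d ≤ u := by
  rcases h with h | ⟨h, h'⟩
  · have hc : Filter.Tendsto (fun t : ℝ => a + t * d) (nhdsWithin (0 : ℝ) (Set.Ioi 0)) (nhds a) := by
      have : Continuous (fun t : ℝ => a + t * d) := by fun_prop
      have h2 := this.tendsto 0
      simp only [zero_mul, add_zero] at h2
      exact h2.mono_left nhdsWithin_le_nhds
    exact (hc.eventually (eventually_lt_nhds h)).mono fun t ht => ht.le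
  · filter_upwards [self_mem_nhdsWithin] with t ht
    have : t * d ≤ 0 := mul_nonpos_of_nonneg_of_nonpos (le_of_lt ht) h'
    linarith

/-- Optimality transfers between feasible points with the same binding constraints. -/
lemma opt_transfer {NG NL E : ℕ}
    (C : Matrix (Fin (NG + NL)) (Fin E) ℝ) (B : Matrix (Fin E) (Fin E) ℝ)
    (f : Fin NG → ℝ) (ξ : XiT NG E) (sl₀ sl : Fin NL → ℝ)
    (sg₀ : Fin NG → ℝ) (θ₀ : Fin (NG + NL) → ℝ)
    (sg : Fin NG → ℝ) (θ : Fin (NG + NL) → ℝ)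
    (hopt : IsOptimal C B f ξ sl₀ sg₀ θ₀) (hfeas : Feasible C B ξ sl sg θ)
    (hbind : BindingIdx C B ξ sg θ = BindingIdx C B ξ sg₀ θ₀) :
    IsOptimal C B f ξ sl sg θ := by
  refine ⟨hfeas, ?_⟩
  intro sg' θ' h'
  by_contra hlt
  push Not at hlt
  obtain ⟨⟨ha1, ha2, ha3, ha4⟩, hmin⟩ := hopt
  obtain ⟨hb1, hb2, hb3, hb4⟩ := hfeas
  obtain ⟨hc1, hc2, hc3, hc4⟩ := h'
  have b1 : ∀ i, sg i = ξ.1 i ↔ sg₀ i = ξ.1 i := fun i => Set.ext_iff.1 hbind (Sum.inl i)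
  have b2 : ∀ i, sg i = ξ.2.1 i ↔ sg₀ i = ξ.2.1 i :=
    fun i => Set.ext_iff.1 hbind (Sum.inr (Sum.inl i))
  have b3 : ∀ e, ((B * Cᵀ) *ᵥ θ) e = ξ.2.2.1 e ↔ ((B * Cᵀ) *ᵥ θ₀) e = ξ.2.2.1 e :=
    fun e => Set.ext_iff.1 hbind (Sum.inr (Sum.inr (Sum.inl e)))
  have b4 : ∀ e, ((B * Cᵀ) *ᵥ θ) e = ξ.2.2.2 e ↔ ((B * Cᵀ) *ᵥ θ₀) e = ξ.2.2.2 e :=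
    fun e => Set.ext_iff.1 hbind (Sum.inr (Sum.inr (Sum.inr e)))
  have e1 : ∀ i, ∀ᶠ t in nhdsWithin (0 : ℝ) (Set.Ioi 0),
      sg₀ i + t * (sg' i - sg i) ≤ ξ.1 i := fun i => ev_le _ _ _ (by
    rcases (ha3 i).2.lt_or_eq with h | h
    · exact Or.inl h
    · right; have := (b1 i).2 h; have := (hc3 i).2; constructor <;> linarith)
  have e2 : ∀ i, ∀ᶠ t in nhdsWithin (0 : ℝ) (Set.Ioi 0),
      -sg₀ i + t * -(sg' i - sg i) ≤ -ξ.2.1 i := fun i => ev_le _ _ _ (by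
    rcases (ha3 i).1.lt_or_eq with h | h
    · left; linarith
    · right; have := (b2 i).2 h.symm; have := (hc3 i).1; constructor <;> linarith)
  have e3 : ∀ e, ∀ᶠ t in nhdsWithin (0 : ℝ) (Set.Ioi 0),
      ((B * Cᵀ) *ᵥ θ₀) e + t * (((B * Cᵀ) *ᵥ θ') e - ((B * Cᵀ) *ᵥ θ) e) ≤ ξ.2.2.1 e :=
    fun e => ev_le _ _ _ (by
    rcases (ha4 e).2.lt_or_eq with h | h
    · exact Or.inl h
    · right; have := (b3 e).2 h; have := (hc4 e).2; constructor <;> linarith)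
  have e4 : ∀ e, ∀ᶠ t in nhdsWithin (0 : ℝ) (Set.Ioi 0),
      -((B * Cᵀ) *ᵥ θ₀) e + t * -(((B * Cᵀ) *ᵥ θ') e - ((B * Cᵀ) *ᵥ θ) e) ≤ -ξ.2.2.2 e :=
    fun e => ev_le _ _ _ (by
    rcases (ha4 e).1.lt_or_eq with h | h
    · left; linarith
    · right; have := (b4 e).2 h.symm; have := (hc4 e).1; constructor <;> linarith)
  rw [← Filter.eventually_all] at e1 e2 e3 e4
  obtain ⟨t, t1, t2, t3, t4, ht⟩ :=
    (e1.and (e2.and (e3.and (e4.and self_mem_nhdsWithin)))).exists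
  have ht : 0 < t := ht
  have key := hmin (sg₀ + t • (sg' - sg)) (θ₀ + t • (θ' - θ)) (by
    refine ⟨?_, ?_, ?_, ?_⟩
    · intro h
      simp [ha1 h, hb1 h, hc1 h]
    · rw [mulVec_add, mulVec_smul, mulVec_sub, ha2, hb2, hc2]
      funext i
      induction i using Fin.addCases with
      | left i => simp
      | right i => simp
    · intro i
      have h1 := t1 i
      have h2 := t2 i
      simp only [Pi.add_apply, Pi.smul_apply, Pi.sub_apply, smul_eq_mul]
      constructor <;> linarith
    · intro e
      have h1 := t3 e
      have h2 := t4 e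
      rw [mulVec_add, mulVec_smul, mulVec_sub]
      simp only [Pi.add_apply, Pi.smul_apply, Pi.sub_apply, smul_eq_mul]
      constructor <;> linarith)
  rw [dotProduct_add, dotProduct_smul, dotProduct_sub, smul_eq_mul] at key
  have : t * (f ⬝ᵥ sg' - f ⬝ᵥ sg) < 0 := mul_neg_of_pos_of_neg ht (by linarith)
  linarith

lemma OPFmap_eq {NG NL E : ℕ}
    (C : Matrix (Fin (NG + NL)) (Fin E) ℝ) (B : Matrix (Fin E) (Fin E) ℝ)
    (f : Fin NG → ℝ) (ξ : XiT NG E) (sl : Fin NL → ℝ)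
    (sg : Fin NG → ℝ) (θ : Fin (NG + NL) → ℝ)
    (hopt : IsOptimal C B f ξ sl sg θ)
    (huniq : ∀ sg' θ', IsOptimal C B f ξ sl sg' θ' → sg' = sg ∧ θ' = θ) :
    OPFmap C B f ξ sl = sg := by
  have h : ∃ p : (Fin NG → ℝ) × (Fin (NG + NL) → ℝ), IsOptimal C B f ξ sl p.1 p.2 :=
    ⟨(sg, θ), hopt⟩
  unfold OPFmap
  rw [dif_pos h]
  exact (huniq _ _ h.choose_spec).1

theorem jacobian_formula {NG NL E : ℕ} (hNG : 0 < NG) (hNL : 0 < NL) (hE : 0 < E)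
    (C : Matrix (Fin (NG + NL)) (Fin E) ℝ) (B : Matrix (Fin E) (Fin E) ℝ)
    (hInc : IsIncidence C) (hConn : ConnectedIncidence C) (hB : PosDiag B)
    (f : Fin NG → ℝ) (hf : f ∈ OmegaF C B)
    (ξ : XiT NG E) (hξ : ξ ∈ OmegaXi C B)
    (sl₀ : Fin NL → ℝ) (hsl : sl₀ ∈ OmegaSl C B ξ)
    (sg₀ : Fin NG → ℝ) (θ₀ : Fin (NG + NL) → ℝ)
    (hopt : IsOptimal C B f ξ sl₀ sg₀ θ₀)
    (huniq : ∀ sg θ, IsOptimal C B f ξ sl₀ sg θ → sg = sg₀ ∧ θ = θ₀)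
    (SG : Finset (Fin NG)) (SB : Finset (Fin E))
    (hSG : ∀ i : Fin NG, i ∈ SG ↔ (sg₀ i = ξ.1 i ∨ sg₀ i = ξ.2.1 i))
    (hSB : ∀ e : Fin E, e ∈ SB ↔
      (((B * Cᵀ) *ᵥ θ₀) e = ξ.2.2.1 e ∨ ((B * Cᵀ) *ᵥ θ₀) e = ξ.2.2.2 e))
    (hcard : SG.card + SB.card = NG - 1)
    (hbind : bindingCount C B ξ sg₀ θ₀ = NG - 1)
    (hindep : LinearIndependent ℝ (fullGrad C B ξ sg₀ θ₀)) :
    Function.Bijective (Rmat C B SG SB).mulVec ∧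
    ∃ U : Set (Fin NL → ℝ), IsOpen U ∧ sl₀ ∈ U ∧ U ⊆ OmegaSl C B ξ ∧
      (∀ sl ∈ U, ∀ sg θ, IsOptimal C B f ξ sl sg θ →
        BindingIdx C B ξ sg θ = BindingIdx C B ξ sg₀ θ₀) ∧
      (∀ sl ∈ U, OPFmap C B f ξ sl = OPFmap C B f ξ sl₀ + JFun C B SG SB (sl - sl₀)) ∧
      ∃ J : (Fin NL → ℝ) →L[ℝ] (Fin NG → ℝ),
        (∀ v, J v = JFun C B SG SB v) ∧ HasFDerivAt (OPFmap C B f ξ) J sl₀ := by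
  classical
  have hN : 0 < NG + NL := by omega
  have hinj := Rmat_injective hNG C B ξ sg₀ θ₀ SG SB hSG hSB hcard hindep
  have hinj' : Function.Injective (Rmat C B SG SB).mulVecLin :=
    (injective_iff_map_eq_zero _).2 (by intro a ha; exact hinj a (by simpa using ha))
  have hdim : Module.finrank ℝ (Fin (NG + NL) → ℝ) =
      Module.finrank ℝ ((Fin NL ⊕ (↥SG ⊕ ↥SB)) ⊕ Unit → ℝ) := by
    simp only [Module.finrank_fintype_fun_eq_card, Fintype.card_sum, Fintype.card_fin,
      Fintype.card_unit, Fintype.card_coe]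
    omega
  have hsurj' : Function.Surjective (Rmat C B SG SB).mulVecLin :=
    (LinearMap.injective_iff_surjective_of_finrank_eq_finrank hdim).1 hinj'
  have hbij : Function.Bijective (Rmat C B SG SB).mulVec := ⟨hinj', hsurj'⟩
  refine ⟨hbij, ?_⟩
  let eqv := LinearEquiv.ofBijective (Rmat C B SG SB).mulVecLin hbij
  let pad : (Fin NL → ℝ) →ₗ[ℝ] ((Fin NL ⊕ (↥SG ⊕ ↥SB)) ⊕ Unit → ℝ) :=
    { toFun := padSl SG SB
      map_add' := by
        intro a b
        funext i
        rcases i with ((i | i | i) | i) <;> simp [padSl]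
      map_smul' := by
        intro a b
        funext i
        rcases i with ((i | i | i) | i) <;> simp [padSl] }
  let X : (Fin NL → ℝ) →ₗ[ℝ] (Fin (NG + NL) → ℝ) := -(eqv.symm.toLinearMap ∘ₗ pad)
  have hRX : ∀ v, Rmat C B SG SB *ᵥ X v = - padSl SG SB v := by
    intro v
    have h := eqv.apply_symm_apply (pad v)
    change Rmat C B SG SB *ᵥ (-(eqv.symm (pad v))) = _
    rw [mulVec_neg]
    exact congrArg _ h
  have hXinv : ∀ v, Function.invFun (Rmat C B SG SB).mulVec (padSl SG SB v) = - X v := by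
    intro v
    apply hbij.1
    rw [Function.rightInverse_invFun hbij.2]
    change _ = Rmat C B SG SB *ᵥ (- X v)
    rw [mulVec_neg, hRX, neg_neg]
  let JL : (Fin NL → ℝ) →ₗ[ℝ] (Fin NG → ℝ) :=
    LinearMap.funLeft ℝ ℝ (Fin.castAdd NL) ∘ₗ (C * B * Cᵀ).mulVecLin ∘ₗ X
  have hJL : ∀ v i, JL v i = ((C * B * Cᵀ) *ᵥ X v) (Fin.castAdd NL i) := fun v i => rfl
  have hJ : ∀ v, JL v = JFun C B SG SB v := by
    intro v
    funext i
    rw [hJL]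
    unfold JFun
    rw [hXinv, mulVec_neg]
    simp
  let FL : (Fin NL → ℝ) →ₗ[ℝ] (Fin E → ℝ) := (B * Cᵀ).mulVecLin ∘ₗ X
  have hFL : ∀ v, FL v = (B * Cᵀ) *ᵥ X v := fun v => rfl
  have hJc : Continuous JL := JL.continuous_of_finiteDimensional
  have hFc : Continuous FL := FL.continuous_of_finiteDimensional
  have hload : ∀ v k, ((C * B * Cᵀ) *ᵥ X v) (Fin.natAdd NG k) = - v k := fun v k => by
    rw [← Rmat_load C B SG SB, hRX]; rfl
  have hgen : ∀ v, ∀ g ∈ SG, JL v g = 0 := fun v g hg => by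
    have := Rmat_gen C B SG SB (X v) ⟨g, hg⟩
    rw [hRX] at this
    rw [hJL]
    refine this.symm.trans ?_
    simp [padSl]
  have hflow : ∀ v, ∀ e ∈ SB, FL v e = 0 := fun v e he => by
    have := Rmat_flow C B SG SB (X v) ⟨e, he⟩
    rw [hRX] at this
    rw [hFL]
    refine this.symm.trans ?_
    simp [padSl]
  have hslack : ∀ v, X v ⟨0, hN⟩ = 0 := fun v => by
    rw [← Rmat_slack C B SG SB (X v) hN (), hRX]
    simp [padSl]
  obtain ⟨⟨ha1, ha2, ha3, ha4⟩, -⟩ := id hopt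
  let sgf : (Fin NL → ℝ) → Fin NG → ℝ := fun sl => sg₀ + JL (sl - sl₀)
  let θf : (Fin NL → ℝ) → Fin (NG + NL) → ℝ := fun sl => θ₀ + X (sl - sl₀)
  have hflf : ∀ sl e, ((B * Cᵀ) *ᵥ θf sl) e = ((B * Cᵀ) *ᵥ θ₀) e + FL (sl - sl₀) e := by
    intro sl e
    simp only [θf, mulVec_add, Pi.add_apply, hFL]
  have hsgf : ∀ sl i, sgf sl i = sg₀ i + JL (sl - sl₀) i := fun sl i => rfl
  have hcs : ∀ i, Continuous fun sl => sgf sl i := by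
    intro i
    have : Continuous sgf := continuous_const.add (hJc.comp (continuous_id.sub continuous_const))
    exact (continuous_apply i).comp this
  have hcf : ∀ e, Continuous fun sl => ((B * Cᵀ) *ᵥ θf sl) e := by
    intro e
    simp only [hflf]
    exact continuous_const.add ((continuous_apply e).comp
      (hFc.comp (continuous_id.sub continuous_const)))
  let U : Set (Fin NL → ℝ) := {sl | (∀ j, 0 < sl j) ∧
    (∀ i, i ∉ SG → sgf sl i < ξ.1 i) ∧ (∀ i, i ∉ SG → ξ.2.1 i < sgf sl i) ∧
    (∀ e, e ∉ SB → ((B * Cᵀ) *ᵥ θf sl) e < ξ.2.2.1 e) ∧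
    (∀ e, e ∉ SB → ξ.2.2.2 e < ((B * Cᵀ) *ᵥ θf sl) e)}
  have hUo : IsOpen U := by
    simp only [U, Set.ofPred_and, Set.ofPred_forall]
    refine (isOpen_iInter_of_finite fun j => isOpen_lt continuous_const (continuous_apply j)).inter
      (IsOpen.inter ?_ (IsOpen.inter ?_ (IsOpen.inter ?_ ?_)))
    · exact isOpen_iInter_of_finite fun i => isOpen_iInter_of_finite fun _ =>
        isOpen_lt (hcs i) continuous_const
    · exact isOpen_iInter_of_finite fun i => isOpen_iInter_of_finite fun _ =>
        isOpen_lt continuous_const (hcs i)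
    · exact isOpen_iInter_of_finite fun i => isOpen_iInter_of_finite fun _ =>
        isOpen_lt (hcf i) continuous_const
    · exact isOpen_iInter_of_finite fun i => isOpen_iInter_of_finite fun _ =>
        isOpen_lt continuous_const (hcf i)
  have hsg0 : sgf sl₀ = sg₀ := by simp [sgf]
  have hθ0 : θf sl₀ = θ₀ := by simp [θf]
  have hU0 : sl₀ ∈ U := by
    refine ⟨hsl.1, ?_, ?_, ?_, ?_⟩
    · intro i hi
      rw [hsg0]
      exact lt_of_le_of_ne (ha3 i).2 fun h => hi ((hSG i).2 (Or.inl h))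
    · intro i hi
      rw [hsg0]
      exact lt_of_le_of_ne (ha3 i).1 fun h => hi ((hSG i).2 (Or.inr h.symm))
    · intro i hi
      rw [hθ0]
      exact lt_of_le_of_ne (ha4 i).2 fun h => hi ((hSB i).2 (Or.inl h))
    · intro i hi
      rw [hθ0]
      exact lt_of_le_of_ne (ha4 i).1 fun h => hi ((hSB i).2 (Or.inr h.symm))
  have hgeq : ∀ sl, ∀ i ∈ SG, sgf sl i = sg₀ i := fun sl i hi => by
    rw [hsgf, hgen _ i hi, add_zero]
  have hfeq : ∀ sl, ∀ e ∈ SB, ((B * Cᵀ) *ᵥ θf sl) e = ((B * Cᵀ) *ᵥ θ₀) e := fun sl e he => by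
    rw [hflf, hflow _ e he, add_zero]
  have hfeas : ∀ sl ∈ U, Feasible C B ξ sl (sgf sl) (θf sl) := by
    rintro sl ⟨u0, u1, u2, u3, u4⟩
    refine ⟨?_, ?_, ?_, ?_⟩
    · intro h
      simp only [θf, Pi.add_apply]
      rw [ha1 h, hslack, add_zero]
    · simp only [θf, mulVec_add, ha2]
      funext i
      induction i using Fin.addCases with
      | left i =>
        simp only [Pi.add_apply, Fin.append_left]
        rw [hsgf, hJL]
      | right k =>
        simp only [Pi.add_apply, Fin.append_right]
        rw [hload, Pi.sub_apply]
        ring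
    · intro i
      by_cases hi : i ∈ SG
      · rw [hgeq sl i hi]; exact ha3 i
      · exact ⟨(u2 i hi).le, (u1 i hi).le⟩
    · intro e
      by_cases he : e ∈ SB
      · rw [hfeq sl e he]; exact ha4 e
      · exact ⟨(u4 e he).le, (u3 e he).le⟩
  have hbidx : ∀ sl ∈ U, BindingIdx C B ξ (sgf sl) (θf sl) = BindingIdx C B ξ sg₀ θ₀ := by
    rintro sl ⟨u0, u1, u2, u3, u4⟩
    ext c
    rcases c with i | i | e | e
    · change sgf sl i = ξ.1 i ↔ sg₀ i = ξ.1 i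
      by_cases hi : i ∈ SG
      · rw [hgeq sl i hi]
      · exact iff_of_false (u1 i hi).ne fun h => hi ((hSG i).2 (Or.inl h))
    · change sgf sl i = ξ.2.1 i ↔ sg₀ i = ξ.2.1 i
      by_cases hi : i ∈ SG
      · rw [hgeq sl i hi]
      · exact iff_of_false (u2 i hi).ne' fun h => hi ((hSG i).2 (Or.inr h))
    · change ((B * Cᵀ) *ᵥ θf sl) e = ξ.2.2.1 e ↔ ((B * Cᵀ) *ᵥ θ₀) e = ξ.2.2.1 e
      by_cases he : e ∈ SB
      · rw [hfeq sl e he]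
      · exact iff_of_false (u3 e he).ne fun h => he ((hSB e).2 (Or.inl h))
    · change ((B * Cᵀ) *ᵥ θf sl) e = ξ.2.2.2 e ↔ ((B * Cᵀ) *ᵥ θ₀) e = ξ.2.2.2 e
      by_cases he : e ∈ SB
      · rw [hfeq sl e he]
      · exact iff_of_false (u4 e he).ne' fun h => he ((hSB e).2 (Or.inr h))
  have hUsub : U ⊆ OmegaSl C B ξ := fun sl h => ⟨h.1, _, _, hfeas sl h⟩
  have hopt' : ∀ sl ∈ U, IsOptimal C B f ξ sl (sgf sl) (θf sl) := fun sl h =>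
    opt_transfer C B f ξ sl₀ sl sg₀ θ₀ _ _ hopt (hfeas sl h) (hbidx sl h)
  have huniq' : ∀ sl ∈ U, ∀ sg θ, IsOptimal C B f ξ sl sg θ → sg = sgf sl ∧ θ = θf sl := by
    intro sl h sg θ hO
    have := (hf.2 ξ hξ sl (hUsub h)).1.unique (y₁ := (sg, θ)) (y₂ := (sgf sl, θf sl)) hO (hopt' sl h)
    exact Prod.mk.inj this
  have hmap : ∀ sl ∈ U, OPFmap C B f ξ sl = sg₀ + JL (sl - sl₀) := fun sl h =>
    OPFmap_eq C B f ξ sl _ _ (hopt' sl h) (huniq' sl h)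
  refine ⟨U, hUo, hU0, hUsub, ?_, ?_, ?_⟩
  · intro sl h sg θ hO
    obtain ⟨rfl, rfl⟩ := huniq' sl h sg θ hO
    exact hbidx sl h
  · intro sl h
    rw [hmap sl h, hmap sl₀ hU0, hJ]
    simp
  · refine ⟨JL.toContinuousLinearMap, hJ, ?_⟩
    have h1 : HasFDerivAt (fun sl => sg₀ + JL.toContinuousLinearMap (sl - sl₀))
        JL.toContinuousLinearMap sl₀ := by
      have := HasFDerivAt.comp (g := JL.toContinuousLinearMap) (f := fun s => s - sl₀) sl₀
        JL.toContinuousLinearMap.hasFDerivAt ((hasFDerivAt_id (𝕜 := ℝ) sl₀).sub_const sl₀)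
      rw [ContinuousLinearMap.comp_id] at this
      exact this.const_add sg₀
    refine h1.congr_of_eventuallyEq ?_
    filter_upwards [hUo.mem_nhds hU0] with sl h
    exact hmap sl h

end
end

section
/- For any S_G ⊆ {1,…,N_G} and S_B ⊆ {1,…,E} with |S_G| + |S_B| = N_G − 1 and S_G ⊥ S_B, there exist f* ∈ ℝ^{N_G} with f* ≥ 0 componentwise, ξ* ∈ Ω_ξ and s^l* ∈ Ω_sl(ξ*) such that the DC-OPF with data (f*, ξ*, s^l*) has a unique optimal solution, and the binding inequality constraints at this optimal solution consist of exactly one generation bound (upper or lower) for each generator i ∈ S_G, exactly one flow bound (upper or lower) for each branch e ∈ S_B, and no other inequality constraint is binding. -/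
open Matrix

noncomputable section

theorem aux_colsum {NG NL E : ℕ} (C : Matrix (Fin (NG + NL)) (Fin E) ℝ)
    (B : Matrix (Fin E) (Fin E) ℝ) (hConn : ConnectedIncidence C) :
    (fun _ => (1 : ℝ)) ᵥ* (C * B * Cᵀ) = 0 := by
  have h1 : Cᵀ *ᵥ (fun _ => (1 : ℝ)) = 0 := (hConn _).2 ⟨1, rfl⟩
  rw [Matrix.mulVec_transpose] at h1
  rw [Matrix.mul_assoc, ← Matrix.vecMul_vecMul, h1, Matrix.zero_vecMul]

theorem aux_const {NG NL E : ℕ} (C : Matrix (Fin (NG + NL)) (Fin E) ℝ)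
    (B : Matrix (Fin E) (Fin E) ℝ) (hConn : ConnectedIncidence C) (c : ℝ) :
    (C * B * Cᵀ) *ᵥ (fun _ => c) = 0 := by
  have h1 : Cᵀ *ᵥ (fun _ => (c : ℝ)) = 0 := (hConn _).2 ⟨c, rfl⟩
  rw [← Matrix.mulVec_mulVec, h1, Matrix.mulVec_zero]

theorem aux_ker {NG NL E : ℕ} (C : Matrix (Fin (NG + NL)) (Fin E) ℝ)
    (B : Matrix (Fin E) (Fin E) ℝ) (hConn : ConnectedIncidence C) (hB : PosDiag B)
    (x : Fin (NG + NL) → ℝ) (hx : (C * B * Cᵀ) *ᵥ x = 0) : ∃ c : ℝ, x = fun _ => c := by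
  apply (hConn x).1
  have hBd : B = Matrix.diagonal (fun e => B e e) := by
    ext e e'
    by_cases h : e = e'
    · subst h; simp
    · simp [Matrix.diagonal_apply_ne _ h, hB.2 e e' h]
  have h2 : (Cᵀ *ᵥ x) ⬝ᵥ (B *ᵥ (Cᵀ *ᵥ x)) = 0 := by
    have : x ⬝ᵥ ((C * B * Cᵀ) *ᵥ x) = 0 := by rw [hx]; simp
    rw [← Matrix.mulVec_mulVec, ← Matrix.mulVec_mulVec, Matrix.dotProduct_mulVec] at this
    rwa [Matrix.mulVec_transpose] at this ⊢
  rw [hBd] at h2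
  simp only [dotProduct, Matrix.mulVec_diagonal] at h2
  rw [Finset.sum_eq_zero_iff_of_nonneg] at h2
  · ext e
    have h3 := h2 e (Finset.mem_univ e)
    have h4 := hB.1 e
    simp only [Pi.zero_apply]
    rcases mul_eq_zero.1 h3 with h | h
    · exact h
    · rcases mul_eq_zero.1 h with h | h
      · exact absurd h h4.ne'
      · exact h
  · intro e _
    have h4 := hB.1 e
    have : (Cᵀ *ᵥ x) e * (B e e * (Cᵀ *ᵥ x) e) = B e e * ((Cᵀ *ᵥ x) e)^2 := by ring
    rw [this]; positivity

theorem aux_surj {NG NL E : ℕ} (C : Matrix (Fin (NG + NL)) (Fin E) ℝ)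
    (B : Matrix (Fin E) (Fin E) ℝ) (hConn : ConnectedIncidence C) (hB : PosDiag B)
    (hN : 0 < NG + NL)
    (b : Fin (NG + NL) → ℝ) (hb : ∑ i, b i = 0) :
    ∃ θ : Fin (NG + NL) → ℝ, θ ⟨0, hN⟩ = 0 ∧ (C * B * Cᵀ) *ᵥ θ = b := by
  have key : ∀ x b' : Fin (NG + NL) → ℝ, (∑ i, b' i = 0) →
      (C * B * Cᵀ + Matrix.of fun _ _ => (1 : ℝ)) *ᵥ x = b' →
      ∑ i, x i = 0 ∧ (C * B * Cᵀ) *ᵥ x = b' := by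
    intro x b' hb' hx
    rw [Matrix.add_mulVec] at hx
    have hJ : (Matrix.of fun (_ _ : Fin (NG + NL)) => (1 : ℝ)) *ᵥ x = fun _ => ∑ i, x i := by
      ext i; simp [Matrix.mulVec, dotProduct]
    rw [hJ] at hx
    have h1 : (fun _ => (1 : ℝ)) ⬝ᵥ ((C * B * Cᵀ) *ᵥ x) = 0 := by
      rw [Matrix.dotProduct_mulVec, aux_colsum C B hConn]; simp
    have h2 : (fun _ => (1 : ℝ)) ⬝ᵥ b' = 0 := by simpa [dotProduct] using hb'
    rw [← hx, dotProduct_add, h1] at h2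
    have h3 : ∑ i, x i = 0 := by
      simp only [dotProduct, zero_add, one_mul, Finset.sum_const, Finset.card_univ,
        Fintype.card_fin, nsmul_eq_mul] at h2
      rcases mul_eq_zero.1 h2 with h | h
      · exact absurd h (by exact_mod_cast hN.ne')
      · exact h
    refine ⟨h3, ?_⟩
    rw [← hx, h3]
    ext i; simp
  have hinj : Function.Injective (C * B * Cᵀ + Matrix.of fun _ _ => (1 : ℝ)).mulVecLin := by
    rw [← LinearMap.ker_eq_bot, LinearMap.ker_eq_bot']
    intro x hx
    obtain ⟨h1, h2⟩ := key x 0 (by simp) hx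
    obtain ⟨c, rfl⟩ := aux_ker C B hConn hB x h2
    simp only [Finset.sum_const, Finset.card_univ, Fintype.card_fin, nsmul_eq_mul] at h1
    rcases mul_eq_zero.1 h1 with h | h
    · exact absurd h (by exact_mod_cast hN.ne')
    · rw [h]; rfl
  obtain ⟨x, hx⟩ := LinearMap.injective_iff_surjective.1 hinj b
  obtain ⟨-, h2⟩ := key x b hb hx
  refine ⟨x + fun _ => - x ⟨0, hN⟩, by simp, ?_⟩
  rw [Matrix.mulVec_add, aux_const C B hConn, h2, add_zero]

/-- Pairing functional with the vector `(ds, dθ)`. -/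
def pairFun {n m : ℕ} (ds : Fin n → ℝ) (dt : Fin m → ℝ) :
    ((Fin n → ℝ) × (Fin m → ℝ)) →ₗ[ℝ] ℝ where
  toFun p := p.1 ⬝ᵥ ds + p.2 ⬝ᵥ dt
  map_add' p q := by simp [add_dotProduct]; ring
  map_smul' c p := by simp [smul_dotProduct]; ring

theorem aux_pair_inr {NG NL E : ℕ} (C : Matrix (Fin (NG + NL)) (Fin E) ℝ)
    (B : Matrix (Fin E) (Fin E) ℝ) (ds : Fin NG → ℝ) (dt : Fin (NG + NL) → ℝ)
    (i : Fin (NG + NL)) :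
    pairFun ds dt (eqGrad C B (Sum.inr i)) =
      ((C * B * Cᵀ) *ᵥ dt) i - Fin.append ds (fun _ : Fin NL => (0 : ℝ)) i := by
  have h : (fun k : Fin NG => if (k : ℕ) = (i : ℕ) then (-1 : ℝ) else 0) ⬝ᵥ ds =
      - Fin.append ds (fun _ : Fin NL => (0 : ℝ)) i := by
    refine Fin.addCases (fun j => ?_) (fun j => ?_) i
    · simp [dotProduct, Fin.val_inj]
    · have : ∀ k : Fin NG, ¬ ((k : ℕ) = NG + (j : ℕ)) := fun k => by omega
      simp [dotProduct, this]
  change (fun k : Fin NG => if (k : ℕ) = (i : ℕ) then (-1 : ℝ) else 0) ⬝ᵥ ds +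
    ((C * B * Cᵀ) *ᵥ dt) i = _
  rw [h]; ring

theorem aux_pair_inl {NG NL E : ℕ} (C : Matrix (Fin (NG + NL)) (Fin E) ℝ)
    (B : Matrix (Fin E) (Fin E) ℝ) (ds : Fin NG → ℝ) (dt : Fin (NG + NL) → ℝ)
    (hN : 0 < NG + NL) (u : Unit) :
    pairFun ds dt (eqGrad C B (Sum.inl u)) = dt ⟨0, hN⟩ := by
  have : ∀ j : Fin (NG + NL), ((j : ℕ) = 0) ↔ j = ⟨0, hN⟩ := fun j => by simp [Fin.ext_iff]
  simp [pairFun, eqGrad, dotProduct, this]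

theorem aux_rep {n m : ℕ} (φ : ((Fin n → ℝ) × (Fin m → ℝ)) →ₗ[ℝ] ℝ) :
    φ = pairFun (fun i => φ (Pi.single i 1, 0)) (fun j => φ (0, Pi.single j 1)) := by
  apply LinearMap.prod_ext <;> apply LinearMap.pi_ext' <;> intro i <;> ext <;>
    simp [pairFun]

theorem aux_key {NG NL E : ℕ} (hNG : 0 < NG)
    (C : Matrix (Fin (NG + NL)) (Fin E) ℝ) (B : Matrix (Fin E) (Fin E) ℝ)
    (hConn : ConnectedIncidence C) (hB : PosDiag B)
    (SG : Finset (Fin NG)) (SB : Finset (Fin E))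
    (hcard : SG.card + SB.card = NG - 1) (hperp : Perp C B SG SB) (hN : 0 < NG + NL) :
    ∃ (f g : Fin NG → ℝ) (h : Fin E → ℝ), (∀ i, 0 ≤ f i) ∧ (∀ i, i ∈ SG ↔ g i ≠ 0) ∧
      (∀ e, e ∈ SB ↔ h e ≠ 0) ∧
      ∀ (ds : Fin NG → ℝ) (dt : Fin (NG + NL) → ℝ), dt ⟨0, hN⟩ = 0 →
        (C * B * Cᵀ) *ᵥ dt = Fin.append ds (fun _ : Fin NL => (0 : ℝ)) →
        f ⬝ᵥ ds = ∑ i, g i * ds i + ∑ e, h e * ((B * Cᵀ) *ᵥ dt) e ∧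
        ((∀ i ∈ SG, ds i = 0) → (∀ e ∈ SB, ((B * Cᵀ) *ᵥ dt) e = 0) → ds = 0 ∧ dt = 0) := by
  classical
  unfold Perp at hperp
  set v : (Unit ⊕ Fin (NG + NL)) ⊕ (↥SG ⊕ ↥SB) → (Fin NG → ℝ) × (Fin (NG + NL) → ℝ) := _ with hv
  change LinearIndependent ℝ v at hperp
  let b := basisOfLinearIndependentOfCardEqFinrank' v hperp (by
    simp [Module.finrank_prod]; omega)
  have hbv : ∀ k, b k = v k := fun k => by simp [b]
  have hpG : ∀ (ds : Fin NG → ℝ) (dt : Fin (NG + NL) → ℝ) (i : SG),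
      pairFun ds dt (v (Sum.inr (Sum.inl i))) = ds i := by
    intro ds dt i; simp [pairFun, hv]
  have hpB : ∀ (ds : Fin NG → ℝ) (dt : Fin (NG + NL) → ℝ) (e : SB),
      pairFun ds dt (v (Sum.inr (Sum.inr e))) = ((B * Cᵀ) *ᵥ dt) e := by
    intro ds dt e; simp [pairFun, hv, Matrix.mulVec, dotProduct]
  -- coordinate functionals
  have hone : ∀ k, b.coord (Sum.inr k) ((fun _ => (1 : ℝ)), 0) = 0 := by
    intro k
    have h1 : ((fun _ => (1 : ℝ)), (0 : Fin (NG + NL) → ℝ)) =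
        - ∑ i, v (Sum.inl (Sum.inr i)) := by
      have h2 := aux_colsum C B hConn
      apply Prod.ext
      · ext i
        simp only [Prod.fst_neg, Prod.fst_sum, Pi.neg_apply, Finset.sum_apply, hv, eqGrad]
        rw [Fin.sum_univ_add]
        have : ∀ k : Fin NL, ¬ ((i : ℕ) = NG + (k : ℕ)) := fun k => by omega
        simp [this, Fin.val_inj]
      · ext j
        have h3 := congrFun h2 j
        simp only [Matrix.vecMul, dotProduct, one_mul, Pi.zero_apply] at h3
        simp only [Prod.snd_neg, Prod.snd_sum, Pi.neg_apply, Finset.sum_apply, hv, eqGrad, h3]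
        simp
    rw [h1, map_neg, map_sum]
    simp [← hbv, Finsupp.single_apply]
  have hne : ∀ k, (b.coord (Sum.inr k)) ∘ₗ
      (LinearMap.inl ℝ (Fin NG → ℝ) (Fin (NG + NL) → ℝ)) ≠ 0 := by
    intro k hk
    have hrep := aux_rep (b.coord (Sum.inr k))
    set ds : Fin NG → ℝ := fun i => b.coord (Sum.inr k) (Pi.single i 1, 0) with hds
    set dt : Fin (NG + NL) → ℝ := fun j => b.coord (Sum.inr k) (0, Pi.single j 1) with hdt
    have hds0 : ds = 0 := by
      ext i
      exact LinearMap.congr_fun hk (Pi.single i 1)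
    have hcoord : ∀ j, pairFun ds dt (eqGrad C B j) = 0 := by
      intro j
      rw [← hrep]
      have : eqGrad C B j = b (Sum.inl j) := by rw [hbv]
      rw [this]; simp
    have h0 : dt ⟨0, hN⟩ = 0 := by rw [← aux_pair_inl C B ds dt hN ()]; exact hcoord _
    have hL : (C * B * Cᵀ) *ᵥ dt = 0 := by
      ext i
      have := hcoord (Sum.inr i)
      rw [aux_pair_inr, hds0] at this
      have h2 : Fin.append (0 : Fin NG → ℝ) (fun _ : Fin NL => (0 : ℝ)) i = 0 := by
        refine Fin.addCases (fun j => ?_) (fun j => ?_) i <;> simp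
      rw [h2] at this
      simpa using this
    obtain ⟨c, hc⟩ := aux_ker C B hConn hB dt hL
    have hdt0 : dt = 0 := by
      rw [hc] at h0 ⊢
      simp only at h0
      rw [h0]; rfl
    have : b.coord (Sum.inr k) (b (Sum.inr k)) = 1 := by simp
    rw [hrep, hds0, hdt0] at this
    simp [pairFun] at this
  obtain ⟨f0, hf0⟩ := Submodule.exists_forall_notMem_of_forall_ne_top
    (fun k => LinearMap.ker ((b.coord (Sum.inr k)) ∘ₗ
      (LinearMap.inl ℝ (Fin NG → ℝ) (Fin (NG + NL) → ℝ))))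
    (fun k hk => hne k (LinearMap.ker_eq_top.1 hk))
  let M : ℝ := ∑ i, |f0 i|
  let f : Fin NG → ℝ := f0 + M • (fun _ => (1 : ℝ))
  have hc : ∀ k, b.repr (f, 0) (Sum.inr k) ≠ 0 := by
    intro k
    have h1 : (f, (0 : Fin (NG + NL) → ℝ)) = (f0, 0) + M • ((fun _ => (1 : ℝ)), 0) := by
      simp [f]
    have h2 : b.coord (Sum.inr k) (f, 0) = b.coord (Sum.inr k) (f0, 0) := by
      rw [h1, map_add, map_smul, hone]; simp
    have h3 := hf0 k
    rw [LinearMap.mem_ker] at h3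
    intro h4
    apply h3
    change b.coord (Sum.inr k) (f0, 0) = 0
    rw [← h2]; exact h4
  refine ⟨f, fun i => if hi : i ∈ SG then b.repr (f, 0) (Sum.inr (Sum.inl ⟨i, hi⟩)) else 0,
    fun e => if he : e ∈ SB then b.repr (f, 0) (Sum.inr (Sum.inr ⟨e, he⟩)) else 0,
    ?_, ?_, ?_, ?_⟩
  · intro i
    have h1 : |f0 i| ≤ M := Finset.single_le_sum (f := fun i => |f0 i|)
      (fun _ _ => abs_nonneg _) (Finset.mem_univ i)
    have h2 := neg_abs_le (f0 i)
    simp only [f, Pi.add_apply, Pi.smul_apply, smul_eq_mul, mul_one]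
    linarith
  · intro i
    by_cases hi : i ∈ SG
    · simp [hi, hc]
    · simp [hi]
  · intro e
    by_cases he : e ∈ SB
    · simp [he, hc]
    · simp [he]
  · intro ds dt h0 hL
    have heq : ∀ j, pairFun ds dt (v (Sum.inl j)) = 0 := by
      rintro (u | i)
      · exact (aux_pair_inl C B ds dt hN u).trans h0
      · refine (aux_pair_inr C B ds dt i).trans ?_
        rw [hL]; simp
    constructor
    · have h1 : pairFun ds dt (f, 0) = f ⬝ᵥ ds := by simp [pairFun]
      rw [← h1]
      conv_lhs => rw [← b.sum_repr (f, 0)]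
      rw [map_sum]
      simp only [map_smul, hbv, Fintype.sum_sum_type (α₁ := Unit ⊕ Fin (NG + NL)), heq,
        smul_zero, Finset.sum_const_zero, zero_add]
      rw [Fintype.sum_sum_type]
      simp only [hpG, hpB, smul_eq_mul]
      congr 1
      · rw [← Finset.sum_subset (Finset.subset_univ SG), ← Finset.sum_coe_sort SG]
        · apply Finset.sum_congr rfl
          intro i _; simp
        · intro i _ hi; simp [hi]
      · rw [← Finset.sum_subset (Finset.subset_univ SB), ← Finset.sum_coe_sort SB]
        · apply Finset.sum_congr rfl
          intro i _; simp
        · intro i _ hi; simp [hi]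
    · intro hG hBz
      have hz : pairFun ds dt = 0 := by
        apply b.ext
        rintro (j | i | e)
        · rw [hbv]; exact heq j
        · rw [hbv, hpG]; exact hG _ i.2
        · rw [hbv, hpB]; exact hBz _ e.2
      constructor
      · ext i
        simpa [pairFun] using LinearMap.congr_fun hz (Pi.single i 1, 0)
      · ext i
        simpa [pairFun] using LinearMap.congr_fun hz (0, Pi.single i 1)

theorem exists_instance_with_binding_pattern {NG NL E : ℕ} (hNG : 0 < NG) (hNL : 0 < NL) (hE : 0 < E)
    (C : Matrix (Fin (NG + NL)) (Fin E) ℝ) (B : Matrix (Fin E) (Fin E) ℝ)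
    (hInc : IsIncidence C) (hConn : ConnectedIncidence C) (hB : PosDiag B)
    (SG : Finset (Fin NG)) (SB : Finset (Fin E))
    (hcard : SG.card + SB.card = NG - 1) (hperp : Perp C B SG SB) :
    ∃ (f : Fin NG → ℝ) (ξ : XiT NG E) (sl : Fin NL → ℝ),
      (∀ i, 0 ≤ f i) ∧ ξ ∈ OmegaXi C B ∧ sl ∈ OmegaSl C B ξ ∧
      ∃ sg θ, IsOptimal C B f ξ sl sg θ ∧
        (∀ sg' θ', IsOptimal C B f ξ sl sg' θ' → sg' = sg ∧ θ' = θ) ∧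
        (∀ i : Fin NG, ((i ∈ SG) ↔ (sg i = ξ.1 i ∨ sg i = ξ.2.1 i)) ∧
          ¬(sg i = ξ.1 i ∧ sg i = ξ.2.1 i)) ∧
        (∀ e : Fin E, ((e ∈ SB) ↔
            (((B * Cᵀ) *ᵥ θ) e = ξ.2.2.1 e ∨ ((B * Cᵀ) *ᵥ θ) e = ξ.2.2.2 e)) ∧
          ¬(((B * Cᵀ) *ᵥ θ) e = ξ.2.2.1 e ∧ ((B * Cᵀ) *ᵥ θ) e = ξ.2.2.2 e)) := by
  have hN : 0 < NG + NL := by omega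
  obtain ⟨f, g, h, hf, hg, hh, hkey⟩ := aux_key hNG C B hConn hB SG SB hcard hperp hN
  have hNLr : (0 : ℝ) < NL := by exact_mod_cast hNL
  have hNGr : (0 : ℝ) < NG := by exact_mod_cast hNG
  obtain ⟨θ, hθ0, hθ⟩ := aux_surj C B hConn hB hN
    (Fin.append (fun _ : Fin NG => (NL : ℝ)) (fun _ : Fin NL => -(NG : ℝ))) (by
      rw [Fin.sum_univ_add]; simp; ring)
  let sg : Fin NG → ℝ := fun _ => (NL : ℝ)
  let sl : Fin NL → ℝ := fun _ => (NG : ℝ)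
  let p : Fin E → ℝ := (B * Cᵀ) *ᵥ θ
  let ξ : XiT NG E := (fun i => if g i < 0 then sg i else sg i + 1,
    fun i => if 0 < g i then sg i else 0,
    fun e => if h e < 0 then p e else p e + 1,
    fun e => if 0 < h e then p e else p e - 1)
  have hfeas : Feasible C B ξ sl sg θ := by
    refine ⟨fun _ => hθ0, hθ, fun i => ⟨?_, ?_⟩, fun e => ⟨?_, ?_⟩⟩
    · change (if 0 < g i then sg i else 0) ≤ sg i
      split_ifs
      · exact le_rfl
      · exact hNLr.le
    · change sg i ≤ (if g i < 0 then sg i else sg i + 1)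
      split_ifs <;> linarith
    · change (if 0 < h e then p e else p e - 1) ≤ p e
      split_ifs <;> linarith
    · change p e ≤ (if h e < 0 then p e else p e + 1)
      split_ifs <;> linarith
  have hsl : ∀ j, 0 < sl j := fun _ => hNGr
  have hmain : ∀ sg' θ', Feasible C B ξ sl sg' θ' → f ⬝ᵥ sg ≤ f ⬝ᵥ sg' ∧
      (f ⬝ᵥ sg' ≤ f ⬝ᵥ sg → sg' = sg ∧ θ' = θ) := by
    rintro sg' θ' ⟨h0, hL, hs, hp⟩
    obtain ⟨k1, k2⟩ := hkey (sg' - sg) (θ' - θ) (by simp [h0 hN, hθ0]) (by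
      rw [Matrix.mulVec_sub, hL, hθ]
      ext i
      refine Fin.addCases (fun j => ?_) (fun j => ?_) i <;> simp [sg, sl])
    rw [dotProduct_sub] at k1
    have hG : ∀ i, 0 ≤ g i * (sg' - sg) i := by
      intro i
      have a1 : (if 0 < g i then sg i else 0) ≤ sg' i := (hs i).1
      have a2 : sg' i ≤ (if g i < 0 then sg i else sg i + 1) := (hs i).2
      rw [Pi.sub_apply]
      rcases lt_trichotomy (g i) 0 with c | c | c
      · rw [if_pos c] at a2
        exact mul_nonneg_of_nonpos_of_nonpos c.le (by linarith)
      · rw [c]; simp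
      · rw [if_pos c] at a1
        exact mul_nonneg c.le (by linarith)
    have hBq : ∀ e, 0 ≤ h e * ((B * Cᵀ) *ᵥ (θ' - θ)) e := by
      intro e
      have a1 : (if 0 < h e then p e else p e - 1) ≤ ((B * Cᵀ) *ᵥ θ') e := (hp e).1
      have a2 : ((B * Cᵀ) *ᵥ θ') e ≤ (if h e < 0 then p e else p e + 1) := (hp e).2
      rw [Matrix.mulVec_sub, Pi.sub_apply]
      change 0 ≤ h e * (_ - p e)
      rcases lt_trichotomy (h e) 0 with c | c | c
      · rw [if_pos c] at a2
        exact mul_nonneg_of_nonpos_of_nonpos c.le (by linarith)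
      · rw [c]; simp
      · rw [if_pos c] at a1
        exact mul_nonneg c.le (by linarith)
    have t1 := Finset.sum_nonneg (fun i (_ : i ∈ Finset.univ) => hG i)
    have t2 := Finset.sum_nonneg (fun i (_ : i ∈ Finset.univ) => hBq i)
    refine ⟨by linarith, fun hle => ?_⟩
    have u1 : ∑ i, g i * (sg' - sg) i = 0 := by linarith
    have u2 : ∑ e, h e * ((B * Cᵀ) *ᵥ (θ' - θ)) e = 0 := by linarith
    rw [Finset.sum_eq_zero_iff_of_nonneg (fun i _ => hG i)] at u1
    rw [Finset.sum_eq_zero_iff_of_nonneg (fun i _ => hBq i)] at u2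
    obtain ⟨w1, w2⟩ := k2
      (fun i hi => (mul_eq_zero.1 (u1 i (Finset.mem_univ i))).resolve_left ((hg i).1 hi))
      (fun e he => (mul_eq_zero.1 (u2 e (Finset.mem_univ e))).resolve_left ((hh e).1 he))
    exact ⟨sub_eq_zero.1 w1, sub_eq_zero.1 w2⟩
  refine ⟨f, ξ, sl, hf, ⟨?_, ?_, ?_, sl, hsl, sg, θ, hfeas⟩, ⟨hsl, sg, θ, hfeas⟩, sg, θ,
    ⟨hfeas, fun sg' θ' hf' => (hmain sg' θ' hf').1⟩,
    fun sg' θ' ho => (hmain sg' θ' ho.1).2 (ho.2 sg θ hfeas), ?_, ?_⟩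
  · intro i
    change 0 ≤ (if 0 < g i then sg i else 0)
    split_ifs
    · exact hNLr.le
    · exact le_rfl
  · intro i
    change (if 0 < g i then sg i else 0) < (if g i < 0 then sg i else sg i + 1)
    have : 0 < sg i := hNLr
    split_ifs <;> linarith
  · intro e
    change (if 0 < h e then p e else p e - 1) < (if h e < 0 then p e else p e + 1)
    split_ifs <;> linarith
  · intro i
    rw [hg i]
    change (_ ↔ (sg i = (if g i < 0 then sg i else sg i + 1) ∨
      sg i = (if 0 < g i then sg i else 0))) ∧
      ¬ (sg i = (if g i < 0 then sg i else sg i + 1) ∧ sg i = (if 0 < g i then sg i else 0))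
    have hpos : sg i ≠ 0 := hNLr.ne'
    rcases lt_trichotomy (g i) 0 with c | c | c
    · simp [c, c.ne, c.not_gt, hpos]
    · simp [c, hpos]
    · simp [c, c.ne', c.not_gt]
  · intro e
    rw [hh e]
    change (_ ↔ (p e = (if h e < 0 then p e else p e + 1) ∨
      p e = (if 0 < h e then p e else p e - 1))) ∧
      ¬ (p e = (if h e < 0 then p e else p e + 1) ∧ p e = (if 0 < h e then p e else p e - 1))
    have hm : p e ≠ p e - 1 := by intro hx; linarith
    rcases lt_trichotomy (h e) 0 with c | c | c
    · simp [c, c.ne, c.not_gt, hm]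
    · simp [c, hm]
    · simp [c, c.ne', c.not_gt]

end
end
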